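/- Let U be a real k×n matrix with UᵀU = Id + Δ where ‖Δ‖_op < 1/2, and let η ∈ ℝ^n with 0 < η_min ≤ η_i ≤ η_max ≤ 1 for all i, where η_min = min_i η_i and η_max = max_i η_i. Then for every v ∈ ℝ^n with ‖v‖₂ = 1, ‖U diag(η) v‖₂² ≥ η_min² − 3 η_max η_min ‖Δ‖_op; equivalently, the smallest singular value of U diag(η) satisfies σ_min(U diag(η))² ≥ η_min² − 3 η_max η_min ‖Δ‖_op. -/

import Mathlib

open scoped BigOperators Matrix

attribute [local instance 10] Classical.propDecidable

noncomputable section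

/-- The index `t mod m` as an element of `Fin m`. -/
def idx (m : ℕ) [NeZero m] (t : ℤ) : Fin m :=
  ⟨(t % (m : ℤ)).toNat, by
    have hm : 0 < m := Nat.pos_of_ne_zero (NeZero.ne m)
    have hm' : (0 : ℤ) < (m : ℤ) := by exact_mod_cast hm
    have h1 : 0 ≤ t % (m : ℤ) := Int.emod_nonneg t (ne_of_gt hm')
    have h2 : t % (m : ℤ) < (m : ℤ) := Int.emod_lt_of_pos t hm'
    omega⟩

/-- Cyclic shift: `(cshift τ v) i = v ((i - τ) mod m)`. -/
def cshift {m : ℕ} [NeZero m] (τ : ℤ) (v : Fin m → ℝ) : Fin m → ℝ :=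
  fun i => v (idx m ((i : ℤ) - τ))

/-- Zero padding `ι : ℝ^k → ℝ^m`. -/
def pad (k m : ℕ) (a : Fin k → ℝ) : Fin m → ℝ :=
  fun i => if h : (i : ℕ) < k then a ⟨i, h⟩ else 0

/-- Restriction to the first `k` coordinates, `ι* : ℝ^m → ℝ^k`. -/
def unpad {k m : ℕ} (h : k ≤ m) (v : Fin m → ℝ) : Fin k → ℝ :=
  fun j => v (Fin.castLE h j)

/-- Circulant matrix `C_w` whose `j`-th column is `s_j[w]`. -/
def circ {m : ℕ} [NeZero m] (w : Fin m → ℝ) : Matrix (Fin m) (Fin m) ℝ :=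
  Matrix.of fun i j => cshift (j : ℤ) w i

/-- Reversed circulant matrix `Č_{a0}` whose `j`-th column is `s_{-j}[ι a0]`. -/
def rcirc (k m : ℕ) [NeZero m] (a0 : Fin k → ℝ) : Matrix (Fin m) (Fin m) ℝ :=
  Matrix.of fun i j => cshift (-(j : ℤ)) (pad k m a0) i

/-- Circular convolution `w ⊛ x = C_w x`. -/
def conv {m : ℕ} [NeZero m] (w x : Fin m → ℝ) : Fin m → ℝ := (circ w).mulVec x

def dotp {α : Type*} [Fintype α] (u v : α → ℝ) : ℝ := ∑ i, u i * v i

def l2sq {α : Type*} [Fintype α] (v : α → ℝ) : ℝ := ∑ i, v i ^ 2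

def l2norm {α : Type*} [Fintype α] (v : α → ℝ) : ℝ := Real.sqrt (l2sq v)

def l1norm {α : Type*} [Fintype α] (v : α → ℝ) : ℝ := ∑ i, |v i|

/-- Scalar soft-thresholding. -/
def soft (lam t : ℝ) : ℝ := Real.sign t * max (|t| - lam) 0

/-- Entrywise soft-thresholding `S_λ`. -/
def softvec {m : ℕ} (lam : ℝ) (u : Fin m → ℝ) : Fin m → ℝ := fun i => soft lam (u i)

/-- The shift truncation `ι* s_{-τ}[ι a0] ∈ ℝ^k`. -/
def shiftTrunc {k m : ℕ} [NeZero m] (h : k ≤ m) (a0 : Fin k → ℝ) (τ : Fin m) : Fin k → ℝ :=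
  unpad h (cshift (-(τ : ℤ)) (pad k m a0))

/-- The inner objective of the simplified marginal problem. -/
def phiHatInner (k m : ℕ) [NeZero m] (lam : ℝ) (a0 a : Fin k → ℝ) (x : Fin m → ℝ) : ℝ :=
  l2sq (pad k m a0) / 2 + l2sq x / 2 - dotp (conv (pad k m a) x) (pad k m a0) + lam * l1norm x

/-- The simplified marginal objective `φ̂`. -/
def phiHat (k m : ℕ) [NeZero m] (lam : ℝ) (a0 a : Fin k → ℝ) : ℝ :=
  sInf (Set.range (phiHatInner k m lam a0 a))

/-- Zero-padding `ι` as an `m × k` matrix. -/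
def padM (k m : ℕ) : Matrix (Fin m) (Fin k) ℝ :=
  Matrix.of fun i j => if (i : ℕ) = (j : ℕ) then 1 else 0

/-- The diagonal 0/1 projection matrix `P_I`. -/
def projM {m : ℕ} (I : Set (Fin m)) : Matrix (Fin m) (Fin m) ℝ :=
  Matrix.of fun i j => if i = j ∧ i ∈ I then 1 else 0

/-- The `ℓ² → ℓ²` operator norm of a matrix. -/
def opNorm {α β : Type*} [Fintype α] [Fintype β] (A : Matrix α β ℝ) : ℝ :=
  sSup {c | ∃ v : β → ℝ, l2norm v = 1 ∧ c = l2norm (A.mulVec v)}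

/-- The `ℓ² → ℓ∞` operator norm of a matrix. -/
def l2linfNorm {α β : Type*} [Fintype α] [Fintype β] (A : Matrix α β ℝ) : ℝ :=
  sSup {c | ∃ v : β → ℝ, l2norm v = 1 ∧ c = sSup {d | ∃ i, d = |A.mulVec v i|}}

/-- The smallest eigenvalue of a symmetric matrix, via the Rayleigh quotient. -/
def lamMin {n : ℕ} (A : Matrix (Fin n) (Fin n) ℝ) : ℝ :=
  sInf {c | ∃ v : Fin n → ℝ, l2sq v = 1 ∧ c = dotp v (A.mulVec v)}

/-- `‖v‖_p^p = ∑ |v i|^p` for a real exponent `p`. -/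
def lpPow {α : Type*} [Fintype α] (p : ℝ) (v : α → ℝ) : ℝ := ∑ i, |v i| ^ p

/-- The `ℓ^p` norm with real exponent `p`. -/
def lpNorm {α : Type*} [Fintype α] (p : ℝ) (v : α → ℝ) : ℝ := (lpPow p v) ^ (1 / p)

/-- The continuous linear functional `v ↦ ⟨g, v⟩` on `ℝ^n`. -/
def dotCLM {n : ℕ} (g : Fin n → ℝ) : (Fin n → ℝ) →L[ℝ] ℝ :=
  LinearMap.toContinuousLinearMap
    { toFun := fun v => dotp g v
      map_add' := fun x y => by
        simp [dotp, mul_add, Finset.sum_add_distrib]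
      map_smul' := fun c x => by
        simp only [dotp, Pi.smul_apply, smul_eq_mul, RingHom.id_apply, Finset.mul_sum]
        exact Finset.sum_congr rfl fun i _ => by ring }

/-!
For `w = diag(η) v` the Gram identity gives `‖U w‖² = ‖w‖² + ⟨w, Δ w⟩`, and by Cauchy–Schwarz
the error term is at least `-‖Δ‖ ‖w‖²`. Since `‖w‖ ≥ η_min`, this yields the sharper bound
`(1 - ‖Δ‖) η_min²`: if `‖Δ‖ ≤ 1`, multiply `‖w‖² ≥ η_min²` by `1 - ‖Δ‖`; otherwise the bound is
not positive.
-/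

section EuclideanBridge

variable {α β : Type*} [Fintype α] [Fintype β]

theorem l2norm_eq_norm_toLp (v : α → ℝ) : l2norm v = ‖WithLp.toLp 2 v‖ := by
  simp only [l2norm, l2sq, EuclideanSpace.norm_eq, Real.norm_eq_abs, sq_abs]

theorem l2sq_nonneg (v : α → ℝ) : 0 ≤ l2sq v :=
  Finset.sum_nonneg fun i _ => sq_nonneg (v i)

theorem sq_l2norm (v : α → ℝ) : l2norm v ^ 2 = l2sq v :=
  Real.sq_sqrt (l2sq_nonneg v)

theorem l2sq_eq_dotProduct_self (v : α → ℝ) : l2sq v = v ⬝ᵥ v := by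
  simp only [l2sq, dotProduct, sq]

theorem abs_dotProduct_le_l2norm_mul_l2norm (u v : α → ℝ) :
    |u ⬝ᵥ v| ≤ l2norm u * l2norm v := by
  simpa [EuclideanSpace.inner_toLp_toLp, dotProduct_comm, l2norm_eq_norm_toLp] using
    abs_real_inner_le_norm (WithLp.toLp 2 u) (WithLp.toLp 2 v)

open scoped Matrix.Norms.L2Operator in
theorem opNorm_eq_l2_opNorm [DecidableEq β] (A : Matrix α β ℝ) : opNorm A = ‖A‖ := by
  rw [Matrix.l2_opNorm_def, ← ContinuousLinearMap.sSup_sphere_eq_norm, opNorm]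
  congr 1
  ext c
  constructor
  · rintro ⟨v, hv, rfl⟩
    exact ⟨WithLp.toLp 2 v, by simpa [l2norm_eq_norm_toLp] using hv,
      (l2norm_eq_norm_toLp _).symm⟩
  · rintro ⟨x, hx, rfl⟩
    exact ⟨x.ofLp, by simpa [l2norm_eq_norm_toLp] using hx, (l2norm_eq_norm_toLp _).symm⟩

theorem opNorm_nonneg (A : Matrix α β ℝ) : 0 ≤ opNorm A :=
  Real.sSup_nonneg <| by
    rintro _ ⟨v, -, rfl⟩
    exact Real.sqrt_nonneg _

theorem l2norm_mulVec_le (A : Matrix α β ℝ) (v : β → ℝ) :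
    l2norm (A *ᵥ v) ≤ opNorm A * l2norm v := by
  rw [opNorm_eq_l2_opNorm, l2norm_eq_norm_toLp, l2norm_eq_norm_toLp]
  exact A.l2_opNorm_mulVec (WithLp.toLp 2 v)

theorem abs_dotProduct_mulVec_self_le (A : Matrix α α ℝ) (w : α → ℝ) :
    |w ⬝ᵥ A *ᵥ w| ≤ opNorm A * l2sq w :=
  calc
    |w ⬝ᵥ A *ᵥ w| ≤ l2norm w * l2norm (A *ᵥ w) := abs_dotProduct_le_l2norm_mul_l2norm _ _
    _ ≤ l2norm w * (opNorm A * l2norm w) :=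
      mul_le_mul_of_nonneg_left (l2norm_mulVec_le A w) (Real.sqrt_nonneg _)
    _ = opNorm A * l2sq w := by rw [← sq_l2norm]; ring

end EuclideanBridge

section GramPerturbation

variable {α β : Type*} [Fintype α] [Fintype β] [DecidableEq β]

theorem l2sq_mulVec_of_transpose_mul_self_eq_one_add {U : Matrix α β ℝ} {Δ : Matrix β β ℝ}
    (hU : Uᵀ * U = 1 + Δ) (w : β → ℝ) : l2sq (U *ᵥ w) = l2sq w + w ⬝ᵥ Δ *ᵥ w :=
  calc
    l2sq (U *ᵥ w) = w ⬝ᵥ (Uᵀ * U) *ᵥ w := by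
      rw [l2sq_eq_dotProduct_self, ← Matrix.mulVec_mulVec, Matrix.dotProduct_mulVec w,
        Matrix.vecMul_transpose]
    _ = l2sq w + w ⬝ᵥ Δ *ᵥ w := by
      rw [hU, Matrix.add_mulVec, Matrix.one_mulVec, dotProduct_add, l2sq_eq_dotProduct_self]

theorem one_sub_opNorm_mul_l2sq_le_l2sq_mulVec {U : Matrix α β ℝ} {Δ : Matrix β β ℝ}
    (hU : Uᵀ * U = 1 + Δ) (w : β → ℝ) : (1 - opNorm Δ) * l2sq w ≤ l2sq (U *ᵥ w) := by
  have hquad := neg_le_of_abs_le (abs_dotProduct_mulVec_self_le Δ w)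
  rw [l2sq_mulVec_of_transpose_mul_self_eq_one_add hU]
  linarith

theorem sq_mul_l2sq_le_l2sq_diagonal_mulVec {η : β → ℝ} {c : ℝ} (hc : 0 ≤ c)
    (hη : ∀ i, c ≤ |η i|) (v : β → ℝ) :
    c ^ 2 * l2sq v ≤ l2sq (Matrix.diagonal η *ᵥ v) := by
  simp only [l2sq, Matrix.mulVec_diagonal, mul_pow, Finset.mul_sum]
  refine Finset.sum_le_sum fun i _ => mul_le_mul_of_nonneg_right ?_ (sq_nonneg (v i))
  exact sq_le_sq.mpr ((abs_of_nonneg hc).trans_le (hη i))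

theorem stmt_10_general {U : Matrix α β ℝ} {Δ : Matrix β β ℝ} (hU : Uᵀ * U = 1 + Δ)
    {η : β → ℝ} {c : ℝ} (hc : 0 ≤ c) (hη : ∀ i, c ≤ |η i|) {v : β → ℝ} (hv : l2norm v = 1) :
    (1 - opNorm Δ) * c ^ 2 ≤ l2sq ((U * Matrix.diagonal η) *ᵥ v) := by
  set w := Matrix.diagonal η *ᵥ v with hw
  rw [← Matrix.mulVec_mulVec, ← hw]
  have hcw : c ^ 2 ≤ l2sq w := by
    simpa only [← sq_l2norm v, hv, one_pow, mul_one] using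
      sq_mul_l2sq_le_l2sq_diagonal_mulVec hc hη v
  rcases le_total (opNorm Δ) 1 with hsmall | hlarge
  · exact (mul_le_mul_of_nonneg_left hcw (sub_nonneg.mpr hsmall)).trans
      (one_sub_opNorm_mul_l2sq_le_l2sq_mulVec hU w)
  · exact (mul_nonpos_of_nonpos_of_nonneg (sub_nonpos.mpr hlarge) (sq_nonneg c)).trans
      (l2sq_nonneg _)

end GramPerturbation

theorem sq_sub_three_mul_le_one_sub_mul_sq {a b δ : ℝ} (ha : 0 ≤ a) (hab : a ≤ b)
    (hδ : 0 ≤ δ) : a ^ 2 - 3 * b * a * δ ≤ (1 - δ) * a ^ 2 := by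
  have hmono : a * a * δ ≤ b * a * δ := by gcongr
  have hnonneg : 0 ≤ a * a * δ := by positivity
  linarith

/-- lower bound on the smallest singular value of `U diag(η)` when
`UᵀU = Id + Δ` with `‖Δ‖_op < 1/2`. -/
theorem stmt_10 {k n : ℕ} (U : Matrix (Fin k) (Fin n) ℝ)
    (Δ : Matrix (Fin n) (Fin n) ℝ) (hU : Uᵀ * U = 1 + Δ) (hΔ : opNorm Δ < 1 / 2)
    (η : Fin n → ℝ) (ηmin ηmax : ℝ)
    (hmin_mem : ∃ i, η i = ηmin) (hmin_le : ∀ i, ηmin ≤ η i)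
    (hmax_mem : ∃ i, η i = ηmax) (hmax_le : ∀ i, η i ≤ ηmax)
    (hpos : 0 < ηmin) (hone : ηmax ≤ 1) :
    ∀ v : Fin n → ℝ, l2norm v = 1 →
      ηmin ^ 2 - 3 * ηmax * ηmin * opNorm Δ ≤ l2sq ((U * Matrix.diagonal η).mulVec v) := by
  intro v hv
  have hηmin_le_ηmax : ηmin ≤ ηmax := hmin_mem.elim fun i hi => hi ▸ hmax_le i
  exact (sq_sub_three_mul_le_one_sub_mul_sq hpos.le hηmin_le_ηmax (opNorm_nonneg Δ)).trans
    (stmt_10_general hU hpos.le (fun i => (hmin_le i).trans (le_abs_self _)) hv)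

end
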